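/- Let G₁ be an r₁-regular graph on n₁ vertices and m₁ edges, and let G₂ be an arbitrary graph on n₂ vertices. Then for each α ∈ [0,1], the characteristic polynomial of A_α(G₁⟨v⟩G₂), where G₁⟨v⟩G₂ is the R-vertex join, satisfies ψ_{A_α(G₁⟨v⟩G₂)}(x) = (x−2α)^{m₁−n₁} · ψ_{A_α(G₂)}(x−αn₁) · ∏_{i=2}^{n₁} ( x² − (2α+αr₁+αn₂+λ_i(A_α(G₁)))x + 2α²n₂ + 3αr₁ − r₁ + (3α−1)λ_i(A_α(G₁)) ) · ( x² − (2α+αr₁+αn₂+r₁)x + 2α²n₂ + 6αr₁ − 2r₁ − n₁(1−α)²(x−2α)·Γ_{A_α(G₂)}(x−αn₁) ), where λ₁(A_α(G₁)) ≥ ⋯ ≥ λ_{n₁}(A_α(G₁)) are the A_α-eigenvalues of G₁. -/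

import Mathlib

open Matrix Polynomial
open scoped Classical

noncomputable section

/-- `A_α(G) = α·D(G) + (1-α)·A(G)`, where `D(G)` is the diagonal degree matrix and
`A(G)` the adjacency matrix. -/
def Aalpha {V : Type*} [Fintype V] (G : SimpleGraph V) (α : ℝ) : Matrix V V ℝ :=
  α • Matrix.diagonal (fun v => (G.degree v : ℝ)) + (1 - α) • G.adjMatrix ℝ

/-- The `M`-coronal `Γ_M(x) = 1ᵀ (xI − M)⁻¹ 1`, i.e. the sum of the entries of
`(xI − M)⁻¹`. -/
def coronal {n : Type*} [Fintype n] (M : Matrix n n ℝ) (x : ℝ) : ℝ :=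
  ∑ i, ∑ j, (x • (1 : Matrix n n ℝ) - M)⁻¹ i j

/-- The `R`-vertex join `G₁⟨v⟩G₂`: take the `R`-graph `R(G₁)` (for each edge of `G₁` a
new vertex joined to both of its endpoints) together with `G₂`, and join every original
vertex of `G₁` with every vertex of `G₂`. -/
def rVertexJoin {V₁ V₂ : Type*} (G₁ : SimpleGraph V₁) (G₂ : SimpleGraph V₂) :
    SimpleGraph (V₁ ⊕ (↥G₁.edgeSet ⊕ V₂)) :=
  SimpleGraph.fromRel fun a b =>
    match a, b with
    | Sum.inl v, Sum.inl w => G₁.Adj v w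
    | Sum.inl v, Sum.inr (Sum.inl e) => v ∈ (e : Sym2 V₁)
    | Sum.inl _, Sum.inr (Sum.inr _) => True
    | Sum.inr (Sum.inr u), Sum.inr (Sum.inr w) => G₂.Adj u w
    | _, _ => False

theorem det_fromBlocks_fromCols_fromRows {l m n : Type*} [Fintype l] [Fintype m] [Fintype n]
    [DecidableEq l] [DecidableEq m] [DecidableEq n] (A : Matrix l l ℝ) (B₁ : Matrix l m ℝ)
    (B₂ : Matrix l n ℝ) (C₁ : Matrix m l ℝ) (C₂ : Matrix n l ℝ) {d : ℝ} (hd : d ≠ 0)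
    {N : Matrix n n ℝ} (hN : N.det ≠ 0) :
    (fromBlocks A (fromCols B₁ B₂) (fromRows C₁ C₂) (fromBlocks (d • 1) 0 0 N)).det =
      d ^ Fintype.card m * N.det * (A - d⁻¹ • (B₁ * C₁) - B₂ * N⁻¹ * C₂).det := by
  have hN' : IsUnit N.det := hN.isUnit
  have hinv : fromBlocks (d • (1 : Matrix m m ℝ)) 0 0 N * fromBlocks (d⁻¹ • 1) 0 0 N⁻¹ = 1 := by
    simp [fromBlocks_multiply, smul_smul, hd, mul_nonsing_inv N hN', fromBlocks_one]
  let := invertibleOfRightInverse _ _ hinv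
  rw [det_fromBlocks₂₂, det_fromBlocks_zero₂₁, invOf_eq_right_inv hinv, det_smul, det_one, mul_one,
    fromCols_mul_fromBlocks, fromCols_mul_fromRows, sub_sub]
  simp

/-- A matrix with constant row sums `s` under a perturbation by a constant matrix. -/
theorem mul_det_sub_const {n : Type*} [Fintype n] [DecidableEq n] {N : Matrix n n ℝ} {s : ℝ}
    (hs : s ≠ 0) (hN : N *ᵥ 1 = fun _ => s) (c : ℝ) :
    s * (N - of fun _ _ => c).det = (s - Fintype.card n * c) * N.det := by
  have hfac : N - of (fun _ _ => c) =
      N * (1 - replicateCol Unit (fun _ : n => c / s) * replicateRow Unit (fun _ : n => (1 : ℝ))) := by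
    rw [Matrix.mul_sub, Matrix.mul_one]
    congr 1
    ext i j
    have hi := congrFun hN i
    simp only [mulVec, dotProduct, Pi.one_apply, mul_one] at hi
    simp [Matrix.mul_apply, ← Finset.sum_mul, hi]
    field_simp
  rw [hfac, det_mul, det_one_sub_mul_comm]
  simp [Matrix.mul_apply]
  field_simp

theorem det_smul_one_sub_smul {n : Type*} [Fintype n] [DecidableEq n] {M : Matrix n n ℝ}
    {μ : n → ℝ} (hM : M.charpoly = ∏ i, (X - C (μ i))) (p q : ℝ) :
    (p • (1 : Matrix n n ℝ) - q • M).det = ∏ i, (p - q * μ i) := by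
  rcases eq_or_ne q 0 with rfl | hq
  · simp
  · have h : p • (1 : Matrix n n ℝ) - q • M = q • (scalar n (p / q) - M) := by
      ext i j
      by_cases hij : i = j
      · simp [hij]; field_simp
      · simp [hij]
    rw [h, det_smul, ← eval_charpoly, hM, eval_prod, ← Finset.card_univ, ← Finset.prod_const,
      ← Finset.prod_mul_distrib]
    refine Finset.prod_congr rfl fun i _ => ?_
    simp
    field_simp

theorem det_smul_one_sub_smul_sub_const {n : Type*} [Fintype n] [DecidableEq n]
    {M : Matrix n n ℝ} {μ : n → ℝ} (hM : M.charpoly = ∏ i, (X - C (μ i))) {i₀ : n}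
    (hrow : M *ᵥ 1 = fun _ => μ i₀) (p q c : ℝ) :
    (p • (1 : Matrix n n ℝ) - q • M - of fun _ _ => c).det =
      (p - q * μ i₀ - Fintype.card n * c) * ∏ i ∈ Finset.univ.erase i₀, (p - q * μ i) := by
  have hdense := dense_compl_singleton (q * μ i₀)
  refine congrFun (Continuous.ext_on (s := {q * μ i₀}ᶜ) hdense
    (f := fun p => (p • (1 : Matrix n n ℝ) - q • M - of fun _ _ => c).det)
    (g := fun p => (p - q * μ i₀ - Fintype.card n * c) *
      ∏ i ∈ Finset.univ.erase i₀, (p - q * μ i)) ?_ ?_ ?_) p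
  · fun_prop
  · fun_prop
  · intro t ht
    have hs : t - q * μ i₀ ≠ 0 := sub_ne_zero.2 ht
    have hN : (t • (1 : Matrix n n ℝ) - q • M) *ᵥ 1 = fun _ => t - q * μ i₀ := by
      rw [sub_mulVec, smul_mulVec, smul_mulVec, hrow]
      ext; simp
    have := mul_det_sub_const hs hN c
    rw [det_smul_one_sub_smul hM, ← Finset.mul_prod_erase _ _ (Finset.mem_univ i₀)] at this
    refine mul_left_cancel₀ hs ?_
    linear_combination this

theorem Aalpha_apply {V : Type*} [Fintype V] (G : SimpleGraph V) (α : ℝ) (v w : V) :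
    Aalpha G α v w =
      (if v = w then α * G.degree v else 0) + if G.Adj v w then 1 - α else 0 := by
  simp [Aalpha, diagonal_apply]

theorem Aalpha_mulVec_one {V : Type*} [Fintype V] {G : SimpleGraph V} {r : ℕ}
    (hreg : G.IsRegularOfDegree r) (α : ℝ) : Aalpha G α *ᵥ 1 = fun _ => (r : ℝ) := by
  ext v
  have hdeg := G.degree_eq_sum_if_adj (R := ℝ) v
  rw [hreg v] at hdeg
  simp only [mulVec, dotProduct, Aalpha_apply, Pi.one_apply, mul_one, Finset.sum_add_distrib,
    hreg v, Finset.sum_ite_eq, Finset.mem_univ, if_true]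
  have : ∑ w, (if G.Adj v w then 1 - α else 0) = (1 - α) * r := by
    rw [hdeg, Finset.mul_sum]
    simp
  rw [this]
  ring

/-- The largest `A_α`-eigenvalue of an `r`-regular graph is `r`. -/
theorem Aalpha_eigenvalue_max_eq {n r : ℕ} {G : SimpleGraph (Fin n)}
    (hreg : G.IsRegularOfDegree r) {α : ℝ} (hα : α ∈ Set.Icc (0 : ℝ) 1) {μ : Fin n → ℝ}
    (hμch : (Aalpha G α).charpoly = ∏ i, (X - C (μ i))) {i₀ : Fin n} (hi₀ : ∀ i, μ i ≤ μ i₀) :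
    μ i₀ = r := by
  have hrow := Aalpha_mulVec_one hreg α
  have hsum (v : Fin n) : ∑ w, Aalpha G α v w = r := by
    simpa [mulVec, dotProduct] using congrFun hrow v
  have hspec (t : ℝ) : (Module.End.HasEigenvalue (toLin' (Aalpha G α)) t) ↔ ∃ i, t = μ i := by
    rw [Module.End.hasEigenvalue_iff_isRoot_charpoly, charpoly_toLin', hμch]
    simp [eval_prod, Finset.prod_eq_zero_iff, sub_eq_zero]
  apply le_antisymm
  · obtain ⟨k, hk⟩ := eigenvalue_mem_ball ((hspec (μ i₀)).2 ⟨i₀, rfl⟩)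
    have hnorm : ∑ j ∈ Finset.univ.erase k, ‖Aalpha G α k j‖ =
        ∑ j ∈ Finset.univ.erase k, Aalpha G α k j := by
      refine Finset.sum_congr rfl fun j hj => Real.norm_of_nonneg ?_
      rw [Aalpha_apply, if_neg (Finset.ne_of_mem_erase hj).symm, zero_add]
      split_ifs
      · linarith [hα.2]
      · exact le_rfl
    rw [Metric.mem_closedBall, Real.dist_eq, hnorm] at hk
    rw [← hsum k, ← Finset.add_sum_erase _ _ (Finset.mem_univ k)]
    linarith [le_abs_self (μ i₀ - Aalpha G α k k)]
  · obtain ⟨i, hi⟩ := (hspec r).1 <|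
      Module.End.hasEigenvalue_of_hasEigenvector (x := 1) <| by
        refine Module.End.hasEigenvector_iff.2 ⟨?_, ?_⟩
        · rw [Module.End.mem_eigenspace_iff, toLin'_apply, hrow]
          ext; simp
        · intro h
          simpa using congrFun h i₀
    exact hi ▸ hi₀ i

theorem coronal_eq_sum_inv {n : Type*} [Fintype n] [DecidableEq n] (M : Matrix n n ℝ) (x : ℝ) :
    coronal M x = ∑ i, ∑ j, (x • (1 : Matrix n n ℝ) - M)⁻¹ i j := by
  unfold coronal
  congr!

section rVertexJoin

variable {V₁ V₂ : Type*} (G₁ : SimpleGraph V₁) (G₂ : SimpleGraph V₂)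

theorem rVertexJoin_adj_inl_inl (v w : V₁) :
    (rVertexJoin G₁ G₂).Adj (Sum.inl v) (Sum.inl w) ↔ G₁.Adj v w := by
  simp only [rVertexJoin, SimpleGraph.fromRel_adj, G₁.adj_comm w v, or_self, ne_eq,
    Sum.inl.injEq, and_iff_right_iff_imp]
  exact fun h => h.ne

theorem rVertexJoin_adj_inl_edge (v : V₁) (e : G₁.edgeSet) :
    (rVertexJoin G₁ G₂).Adj (Sum.inl v) (Sum.inr (Sum.inl e)) ↔ v ∈ (e : Sym2 V₁) := by
  simp [rVertexJoin]

theorem rVertexJoin_adj_inl_inr (v : V₁) (u : V₂) :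
    (rVertexJoin G₁ G₂).Adj (Sum.inl v) (Sum.inr (Sum.inr u)) := by
  simp [rVertexJoin]

theorem not_rVertexJoin_adj_edge_edge (e f : G₁.edgeSet) :
    ¬(rVertexJoin G₁ G₂).Adj (Sum.inr (Sum.inl e)) (Sum.inr (Sum.inl f)) := by
  simp [rVertexJoin]

theorem not_rVertexJoin_adj_edge_inr (e : G₁.edgeSet) (u : V₂) :
    ¬(rVertexJoin G₁ G₂).Adj (Sum.inr (Sum.inl e)) (Sum.inr (Sum.inr u)) := by
  simp [rVertexJoin]

theorem rVertexJoin_adj_inr_inr (u w : V₂) :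
    (rVertexJoin G₁ G₂).Adj (Sum.inr (Sum.inr u)) (Sum.inr (Sum.inr w)) ↔ G₂.Adj u w := by
  simp only [rVertexJoin, SimpleGraph.fromRel_adj, G₂.adj_comm w u, or_self, ne_eq,
    Sum.inr.injEq, and_iff_right_iff_imp]
  exact fun h => h.ne

/-- The vertex-edge incidence matrix, with columns indexed by the edges. -/
def edgeIncidence : Matrix V₁ G₁.edgeSet ℝ :=
  of fun v e => if v ∈ (e : Sym2 V₁) then 1 else 0

theorem edgeIncidence_eq_incMatrix (v : V₁) (e : G₁.edgeSet) :
    edgeIncidence G₁ v e = G₁.incMatrix ℝ v e := by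
  simp [edgeIncidence, SimpleGraph.incMatrix_apply', SimpleGraph.incidenceSet, e.2]

variable [Fintype V₁]

theorem sum_edgeSet_eq_sum_sym2 {f : Sym2 V₁ → ℝ} (hf : ∀ e ∉ G₁.edgeSet, f e = 0) :
    ∑ e : G₁.edgeSet, f e = ∑ e, f e := by
  rw [← Finset.sum_subset (Finset.subset_univ G₁.edgeSet.toFinset)
    fun e _ he => hf e (by simpa using he), Finset.sum_subtype _ (fun e => Set.mem_toFinset)]

theorem sum_edgeIncidence_row (v : V₁) : ∑ e, edgeIncidence G₁ v e = G₁.degree v := by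
  simp_rw [edgeIncidence_eq_incMatrix]
  rw [sum_edgeSet_eq_sum_sym2 G₁ (f := fun e => G₁.incMatrix ℝ v e), G₁.sum_incMatrix_apply]
  exact fun e he => G₁.incMatrix_of_notMem_incidenceSet fun h => he h.1

theorem sum_edgeIncidence_col (e : G₁.edgeSet) : ∑ v, edgeIncidence G₁ v e = 2 := by
  simp_rw [edgeIncidence_eq_incMatrix]
  exact G₁.sum_incMatrix_apply_of_mem_edgeSet e.2

theorem edgeIncidence_mul_transpose (v w : V₁) :
    (edgeIncidence G₁ * (edgeIncidence G₁)ᵀ) v w =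
      (if v = w then (G₁.degree v : ℝ) else 0) + if G₁.Adj v w then 1 else 0 := by
  have h := congrFun (congrFun (G₁.incMatrix_mul_transpose (R := ℝ)) v) w
  simp only [mul_apply, transpose_apply, edgeIncidence_eq_incMatrix, of_apply] at h ⊢
  rw [sum_edgeSet_eq_sum_sym2 G₁ (f := fun e => G₁.incMatrix ℝ v e * G₁.incMatrix ℝ w e), h]
  · by_cases hvw : v = w <;> simp [hvw]
  · intro e he
    rw [G₁.incMatrix_of_notMem_incidenceSet fun h => he h.1, zero_mul]

variable [Fintype V₂]

theorem degree_rVertexJoin_inl (v : V₁) :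
    ((rVertexJoin G₁ G₂).degree (Sum.inl v) : ℝ) = 2 * G₁.degree v + Fintype.card V₂ := by
  have h₁ := G₁.degree_eq_sum_if_adj (R := ℝ) v
  have h₂ := sum_edgeIncidence_row G₁ v
  simp only [edgeIncidence, of_apply] at h₂
  rw [SimpleGraph.degree_eq_sum_if_adj]
  simp only [Fintype.sum_sum_type, rVertexJoin_adj_inl_inl, rVertexJoin_adj_inl_edge,
    rVertexJoin_adj_inl_inr, if_true, h₂, ← h₁]
  simp
  ring

theorem degree_rVertexJoin_edge (e : G₁.edgeSet) :
    ((rVertexJoin G₁ G₂).degree (Sum.inr (Sum.inl e)) : ℝ) = 2 := by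
  have h := sum_edgeIncidence_col G₁ e
  simp only [edgeIncidence, of_apply] at h
  rw [SimpleGraph.degree_eq_sum_if_adj]
  simp only [Fintype.sum_sum_type, not_rVertexJoin_adj_edge_edge, not_rVertexJoin_adj_edge_inr,
    (rVertexJoin G₁ G₂).adj_comm _ (Sum.inl _), rVertexJoin_adj_inl_edge, h]
  simp

theorem degree_rVertexJoin_inr (u : V₂) :
    ((rVertexJoin G₁ G₂).degree (Sum.inr (Sum.inr u)) : ℝ) =
      G₂.degree u + Fintype.card V₁ := by
  have h := G₂.degree_eq_sum_if_adj (R := ℝ) u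
  rw [SimpleGraph.degree_eq_sum_if_adj]
  simp only [Fintype.sum_sum_type, (rVertexJoin G₁ G₂).adj_comm _ (Sum.inl _),
    (rVertexJoin G₁ G₂).adj_comm _ (Sum.inr (Sum.inl _)), not_rVertexJoin_adj_edge_inr,
    rVertexJoin_adj_inl_inr, rVertexJoin_adj_inr_inr, ← h]
  simp
  ring

theorem smul_one_sub_Aalpha_rVertexJoin [DecidableEq V₁] [DecidableEq V₂]
    [DecidableEq G₁.edgeSet] {r : ℕ} (hreg : G₁.IsRegularOfDegree r)
    (α x : ℝ) :
    x • (1 : Matrix (V₁ ⊕ (G₁.edgeSet ⊕ V₂)) (V₁ ⊕ (G₁.edgeSet ⊕ V₂)) ℝ) -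
        Aalpha (rVertexJoin G₁ G₂) α =
      fromBlocks ((x - α * r - α * Fintype.card V₂) • 1 - Aalpha G₁ α)
        (fromCols (-(1 - α) • edgeIncidence G₁) (of fun _ _ => -(1 - α)))
        (fromRows (-(1 - α) • (edgeIncidence G₁)ᵀ) (of fun _ _ => -(1 - α)))
        (fromBlocks ((x - 2 * α) • 1) 0 0
          ((x - α * Fintype.card V₁) • 1 - Aalpha G₂ α)) := by
  ext i j
  rcases i with v | e | u <;> rcases j with w | f | t
  · by_cases h : v = w <;>
      simp [Aalpha_apply, degree_rVertexJoin_inl, rVertexJoin_adj_inl_inl, h, hreg _]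
    ring
  · simp [Aalpha_apply, rVertexJoin_adj_inl_edge, edgeIncidence]
    split_ifs <;> ring
  · simp [Aalpha_apply, rVertexJoin_adj_inl_inr]
  · simp [Aalpha_apply, (rVertexJoin G₁ G₂).adj_comm _ (Sum.inl _), rVertexJoin_adj_inl_edge,
      edgeIncidence]
    split_ifs <;> ring
  · by_cases h : e = f <;>
      simp [Aalpha_apply, degree_rVertexJoin_edge, not_rVertexJoin_adj_edge_edge, h]
    ring
  · simp [Aalpha_apply, not_rVertexJoin_adj_edge_inr]
  · simp [Aalpha_apply, (rVertexJoin G₁ G₂).adj_comm _ (Sum.inl _), rVertexJoin_adj_inl_inr]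
  · simp [Aalpha_apply, (rVertexJoin G₁ G₂).adj_comm _ (Sum.inr (Sum.inl _)),
      not_rVertexJoin_adj_edge_inr]
  · by_cases h : u = t <;>
      simp [Aalpha_apply, degree_rVertexJoin_inr, rVertexJoin_adj_inr_inr, h]
    ring

end rVertexJoin

/-- Theorem 5.1: the `A_α`-characteristic polynomial of the `R`-vertex join `G₁⟨v⟩G₂`
of an `r₁`-regular graph `G₁` (on `n₁` vertices and `m₁` edges) and an arbitrary graph
`G₂` (on `n₂` vertices). -/
theorem Aalpha_charpoly_rVertexJoin
    {n₁ m₁ n₂ r₁ : ℕ} (G₁ : SimpleGraph (Fin n₁)) (G₂ : SimpleGraph (Fin n₂))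
    (hconn : G₁.Connected) (hreg : G₁.IsRegularOfDegree r₁)
    (hm : Fintype.card G₁.edgeSet = m₁)
    (α : ℝ) (hα : α ∈ Set.Icc (0 : ℝ) 1)
    (μ : Fin n₁ → ℝ) (hμ : Antitone μ)
    (hμch : (Aalpha G₁ α).charpoly = ∏ i, (X - C (μ i)))
    (x : ℝ)
    (hx₁ : ((x - α * n₁) • (1 : Matrix (Fin n₂) (Fin n₂) ℝ) - Aalpha G₂ α).det ≠ 0)
    (hx₂ : x ≠ 2 * α) :
    ((Aalpha (rVertexJoin G₁ G₂) α).charpoly).eval x =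
      (x - 2 * α) ^ ((m₁ : ℤ) - (n₁ : ℤ)) *
        ((Aalpha G₂ α).charpoly).eval (x - α * n₁) *
        (∏ i ∈ Finset.univ.filter (fun i : Fin n₁ => i.val ≠ 0),
          (x ^ 2 - (2 * α + α * r₁ + α * n₂ + μ i) * x
            + 2 * α ^ 2 * n₂ + 3 * α * r₁ - r₁ + (3 * α - 1) * μ i)) *
        (x ^ 2 - (2 * α + α * r₁ + α * n₂ + r₁) * x
          + 2 * α ^ 2 * n₂ + 6 * α * r₁ - 2 * r₁
          - n₁ * (1 - α) ^ 2 * (x - 2 * α) * coronal (Aalpha G₂ α) (x - α * n₁)) := by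
  have hn : 0 < n₁ := Fin.pos_iff_nonempty.2 hconn.nonempty
  let i₀ : Fin n₁ := ⟨0, hn⟩
  have hμ₀ : μ i₀ = r₁ := Aalpha_eigenvalue_max_eq hreg hα hμch fun i => hμ (Nat.zero_le _)
  have hd : x - 2 * α ≠ 0 := sub_ne_zero.2 hx₂
  have hfilter : Finset.univ.filter (fun i : Fin n₁ => i.val ≠ 0) = Finset.univ.erase i₀ := by
    ext i
    simp [i₀, Fin.ext_iff]
  have hblock : ((Aalpha (rVertexJoin G₁ G₂) α).charpoly).eval x =
      (x • (1 : Matrix (Fin n₁ ⊕ (G₁.edgeSet ⊕ Fin n₂)) (Fin n₁ ⊕ (G₁.edgeSet ⊕ Fin n₂)) ℝ) -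
        Aalpha (rVertexJoin G₁ G₂) α).det := by
    rw [eval_charpoly, scalar_apply, smul_one_eq_diagonal]
  have hpoly₂ : ((Aalpha G₂ α).charpoly).eval (x - α * n₁) =
      ((x - α * n₁) • (1 : Matrix (Fin n₂) (Fin n₂) ℝ) - Aalpha G₂ α).det := by
    rw [eval_charpoly, scalar_apply, smul_one_eq_diagonal]
  have hschur := det_smul_one_sub_smul_sub_const hμch (i₀ := i₀)
    (by rw [Aalpha_mulVec_one hreg, hμ₀])
    ((x - 2 * α) * (x - α * r₁ - α * n₂) - (1 - α) ^ 2 * r₁ + (1 - α) * α * r₁)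
    (x - 2 * α + (1 - α)) ((x - 2 * α) * (1 - α) ^ 2 * coronal (Aalpha G₂ α) (x - α * n₁))
  rw [hblock, smul_one_sub_Aalpha_rVertexJoin G₁ G₂ hreg]
  simp only [Fintype.card_fin]
  rw [det_fromBlocks_fromCols_fromRows _ _ _ _ _ hd hx₁, ← hpoly₂, hm, hfilter]
  set S := (x - α * r₁ - α * n₂) • (1 : Matrix (Fin n₁) (Fin n₁) ℝ) - Aalpha G₁ α -
    (x - 2 * α)⁻¹ • (-(1 - α) • edgeIncidence G₁ * -(1 - α) • (edgeIncidence G₁)ᵀ) -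
    of (fun (_ : Fin n₁) (_ : Fin n₂) => -(1 - α)) *
      ((x - α * n₁) • (1 : Matrix (Fin n₂) (Fin n₂) ℝ) - Aalpha G₂ α)⁻¹ *
      of (fun (_ : Fin n₂) (_ : Fin n₁) => -(1 - α)) with hS
  have hSd : (x - 2 * α) • S =
      ((x - 2 * α) * (x - α * r₁ - α * n₂) - (1 - α) ^ 2 * r₁ + (1 - α) * α * r₁) • 1 -
        (x - 2 * α + (1 - α)) • Aalpha G₁ α -
        of (fun _ _ => (x - 2 * α) * (1 - α) ^ 2 * coronal (Aalpha G₂ α) (x - α * n₁)) := by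
    have hcor (v w : Fin n₁) : (of (fun (_ : Fin n₁) (_ : Fin n₂) => -(1 - α)) *
        ((x - α * n₁) • (1 : Matrix (Fin n₂) (Fin n₂) ℝ) - Aalpha G₂ α)⁻¹ *
        of (fun (_ : Fin n₂) (_ : Fin n₁) => -(1 - α))) v w =
          (1 - α) ^ 2 * coronal (Aalpha G₂ α) (x - α * n₁) := by
      simp only [coronal_eq_sum_inv, mul_apply, of_apply, ← Finset.mul_sum, ← Finset.sum_mul]
      rw [Finset.sum_comm]
      ring
    have hinc (v w : Fin n₁) :
        (-(1 - α) • edgeIncidence G₁ * -(1 - α) • (edgeIncidence G₁)ᵀ) v w =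
          (1 - α) ^ 2 * ((if v = w then (r₁ : ℝ) else 0) + if G₁.Adj v w then 1 else 0) := by
      rw [Matrix.smul_mul, Matrix.mul_smul, smul_smul, Matrix.smul_apply,
        edgeIncidence_mul_transpose, hreg v, smul_eq_mul]
      ring_nf
    ext v w
    rw [hS]
    simp only [Matrix.smul_apply, Matrix.sub_apply, hcor, hinc, Aalpha_apply, one_apply, of_apply,
      hreg v, smul_eq_mul]
    split_ifs <;> field_simp <;> ring
  have hdet := congrArg det hSd
  rw [hschur, det_smul, Fintype.card_fin, hμ₀] at hdet
  have hSdet : S.det = ((x - 2 * α) ^ n₁)⁻¹ * ((x - 2 * α) ^ n₁ * S.det) := by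
    field_simp
  rw [hSdet, hdet, zpow_sub₀ hd, zpow_natCast, zpow_natCast]
  have hprod : ∏ i ∈ Finset.univ.erase i₀,
      ((x - 2 * α) * (x - α * r₁ - α * n₂) - (1 - α) ^ 2 * r₁ + (1 - α) * α * r₁ -
        (x - 2 * α + (1 - α)) * μ i) =
      ∏ i ∈ Finset.univ.erase i₀,
        (x ^ 2 - (2 * α + α * r₁ + α * n₂ + μ i) * x
          + 2 * α ^ 2 * n₂ + 3 * α * r₁ - r₁ + (3 * α - 1) * μ i) :=
    Finset.prod_congr rfl fun i _ => by ring
  rw [hprod]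
  ring
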